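/- arXiv:2412.21125 — 3 statements merged into one kernel-verified Lean document; each statement's English description precedes it below -/
import Mathlib

section
/- Let X be a finite subset of ℝⁿ of cardinality d ≥ 1, and identify real-valued functions on X and Borel measures on X with vectors in ℝᵈ, so that ⟨P,φ⟩ is the standard dot product. Let H be a properly constrained hypothesis on X and Φ : X → ℝᵐ a constraint for H. Then Span Φ = H^⊥, where Span Φ = {λ·Φ : λ ∈ ℝᵐ} ⊆ ℝᵈ and H^⊥ is the orthogonal complement in ℝᵈ of the linear span of H. -/
open MeasureTheory Set ENNReal

noncomputable section

/-- The (topological) support of a Borel measure: the set of points all of whose open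
neighbourhoods have positive measure. -/
def msupport {α : Type*} [TopologicalSpace α] [MeasurableSpace α]
    (P : Measure α) : Set α :=
  {x | ∀ U : Set α, IsOpen U → x ∈ U → 0 < P U}

variable {α : Type*} [TopologicalSpace α] [MeasurableSpace α] {X : Set α} {m : ℕ}

/-- A hypothesis on `X`: a nonempty set of Borel probability measures (on `X`,
identified with the Borel probability measures supported in `X`). -/
def IsHypothesis (H : Set (Measure X)) : Prop :=
  H.Nonempty ∧ ∀ P ∈ H, IsProbabilityMeasure P

/-- An e-variable with respect to `H`: a Borel measurable nonnegative function whose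
expectation is at most one under every `P ∈ H`. -/
def IsEVar (H : Set (Measure X)) (E : X → ℝ) : Prop :=
  Measurable E ∧ (∀ x, 0 ≤ E x) ∧ ∀ P ∈ H, ∫⁻ x, ENNReal.ofReal (E x) ∂P ≤ 1

/-- `f` majorises `g` if `f(x) ≥ g(x)` for every `x ∈ X`. -/
def Majorises (f g : X → ℝ) : Prop := ∀ x, g x ≤ f x

/-- A maximal e-variable: an e-variable with no strict majoriser among e-variables. -/
def IsMaximalEVar (H : Set (Measure X)) (E : X → ℝ) : Prop :=
  IsEVar H E ∧ ¬ ∃ E', IsEVar H E' ∧ Majorises E' E ∧ E' ≠ E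

/-- A majorising e-class: an e-class such that every e-variable is majorised by
one of its elements. -/
def IsMajorisingClass (H : Set (Measure X)) (C : Set (X → ℝ)) : Prop :=
  (∀ E ∈ C, IsEVar H E) ∧ ∀ E, IsEVar H E → ∃ E' ∈ C, Majorises E' E

/-- The optimal e-class: a majorising e-class contained in every majorising e-class. -/
def IsOptimalClass (H : Set (Measure X)) (C : Set (X → ℝ)) : Prop :=
  IsMajorisingClass H C ∧ ∀ C', IsMajorisingClass H C' → C ⊆ C'

/-- `P ∈ P_Φ`: the expectation of the ℓ¹-norm of `Φ` under `P` is finite. -/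
def MemPPhi (P : Measure X) (Φ : X → Fin m → ℝ) : Prop :=
  ∫⁻ x, ENNReal.ofReal (∑ i, |Φ x i|) ∂P < ⊤

/-- `Φ` is a constraint for `H`: `Φ` is continuous and `H` is exactly the set of Borel
probability measures `P ∈ P_Φ` with `⟨P, Φ⟩ = 0`. -/
def IsConstraint (H : Set (Measure X)) (Φ : X → Fin m → ℝ) : Prop :=
  Continuous Φ ∧
    H = {P : Measure X | IsProbabilityMeasure P ∧ MemPPhi P Φ ∧ ∫ x, Φ x ∂P = 0}

/-- A proper constraint: a constraint such that `0` lies in the relative interior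
of the convex hull of the image of `Φ`. -/
def IsProperConstraint (H : Set (Measure X)) (Φ : X → Fin m → ℝ) : Prop :=
  IsConstraint H Φ ∧
    (0 : Fin m → ℝ) ∈ intrinsicInterior ℝ (convexHull ℝ (Set.range Φ))

/-- A minimal constraint: a constraint such that `0` lies in the interior
of the convex hull of the image of `Φ`. -/
def IsMinimalConstraint (H : Set (Measure X)) (Φ : X → Fin m → ℝ) : Prop :=
  IsConstraint H Φ ∧
    (0 : Fin m → ℝ) ∈ interior (convexHull ℝ (Set.range Φ))

/-- A finitely constrained hypothesis: one admitting a constraint. -/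
def FinitelyConstrained (H : Set (Measure X)) : Prop :=
  ∃ (m : ℕ) (Φ : X → Fin m → ℝ), IsConstraint H Φ

/-- A properly constrained hypothesis: one admitting a proper constraint. -/
def ProperlyConstrained (H : Set (Measure X)) : Prop :=
  ∃ (m : ℕ) (Φ : X → Fin m → ℝ), IsProperConstraint H Φ

/-- `Λ_{Φ|S} = {λ ∈ ℝᵐ : sup_{x ∈ S} λ·Φ(x) ≤ 1}`. -/
def LambdaSet (Φ : X → Fin m → ℝ) (S : Set X) : Set (Fin m → ℝ) :=
  {l | ∀ x ∈ S, ∑ i, l i * Φ x i ≤ 1}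

/-- The dual e-class `E_H^∨ = {1 - λ·Φ : λ ∈ Λ_Φ}`. -/
def dualClass (Φ : X → Fin m → ℝ) : Set (X → ℝ) :=
  {E | ∃ l ∈ LambdaSet Φ Set.univ, E = fun x => 1 - ∑ i, l i * Φ x i}

/-- A matching set for `H`: a closed set that is exactly the support of some `P ∈ H`. -/
def IsMatchingSet (H : Set (Measure X)) (S : Set X) : Prop :=
  IsClosed S ∧ ∃ P ∈ H, msupport P = S

end

/-!
Let `Ψ i = fun x => Φ x i` be the coordinates of `Φ`. Every `P ∈ H` annihilates the `Ψ i`, so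
`Span Φ ⊆ H^⊥`. Conversely, `H` contains every probability vector annihilating the `Ψ i`, so by
scaling `f ∈ H^⊥` vanishes on every nonnegative vector that annihilates them. Since `0` is in the
relative interior of the convex hull of the values of some constraint, possibly different from `Φ`,
`H` contains a `p` that is positive at every point. If `q` is an arbitrary vector annihilating the
`Ψ i`, then `p + ε q` is nonnegative for small `ε > 0`, hence `f` vanishes on `q`; by duality `f`
is in the span of the `Ψ i`.
-/

section ConvexGeometry

open Topology

variable {ι E : Type*} [AddCommGroup E]

theorem convexHull_range_eq_image_stdSimplex {𝕜 : Type*} [Field 𝕜] [LinearOrder 𝕜]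
    [IsStrictOrderedRing 𝕜] [Module 𝕜 E] [Fintype ι] (v : ι → E) :
    convexHull 𝕜 (range v) = Fintype.linearCombination 𝕜 v '' stdSimplex 𝕜 ι := by
  classical
  rw [← convexHull_rangle_single_eq_stdSimplex, LinearMap.image_convexHull, ← range_comp]
  congr 2
  ext i
  simp

variable [Module ℝ E] [TopologicalSpace E] [IsTopologicalAddGroup E] [ContinuousSMul ℝ E]

theorem exists_mem_openSegment_of_mem_intrinsicInterior {s : Set E} {y z : E}
    (hz : z ∈ intrinsicInterior ℝ s) (hy : y ∈ affineSpan ℝ s) :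
    ∃ w ∈ s, z ∈ openSegment ℝ y w := by
  obtain ⟨z', hz', rfl⟩ := mem_intrinsicInterior.1 hz
  let line : ℝ → affineSpan ℝ s :=
    fun t => ⟨AffineMap.lineMap y z' t, AffineMap.lineMap_mem t hy z'.2⟩
  have line_continuous : Continuous line := AffineMap.lineMap_continuous.subtype_mk _
  have line_one : line 1 = z' := Subtype.ext (AffineMap.lineMap_apply_one y _)
  have line_mem : ∀ᶠ t in 𝓝 1, (line t : E) ∈ s :=
    line_continuous.tendsto' 1 z' line_one (mem_interior_iff_mem_nhds.1 hz')
  obtain ⟨t, hts, ht : 1 < t⟩ :=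
    ((line_mem.filter_mono nhdsWithin_le_nhds).and (self_mem_nhdsWithin (s := Ioi 1))).exists
  have ht₀ : 0 < t := one_pos.trans ht
  refine ⟨line t, hts, 1 - t⁻¹, t⁻¹, sub_pos.2 (inv_lt_one_of_one_lt₀ ht), inv_pos.2 ht₀,
    sub_add_cancel _ _, ?_⟩
  simp only [line, AffineMap.lineMap_apply_module]
  match_scalars <;> field_simp
  ring

theorem exists_pos_weights_of_mem_intrinsicInterior_convexHull_range [Fintype ι] {v : ι → E} {z : E}
    (hz : z ∈ intrinsicInterior ℝ (convexHull ℝ (range v))) :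
    ∃ p ∈ stdSimplex ℝ ι, (∀ i, 0 < p i) ∧ ∑ i, p i • v i = z := by
  have : Nonempty ι :=
    range_nonempty_iff_nonempty.1 (convexHull_nonempty_iff.1 ⟨z, intrinsicInterior_subset hz⟩)
  obtain ⟨u, hu, hu_pos⟩ : ∃ u ∈ stdSimplex ℝ ι, ∀ i, 0 < u i :=
    ⟨_, stdSimplex.barycenter.2, fun _ => by simp [Fintype.card_pos]⟩
  have hull_eq := convexHull_range_eq_image_stdSimplex (𝕜 := ℝ) v
  have hu_mem : Fintype.linearCombination ℝ v u ∈ convexHull ℝ (range v) :=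
    hull_eq ▸ mem_image_of_mem _ hu
  obtain ⟨_, hw_mem, a, b, ha, hb, hab, rfl⟩ :=
    exists_mem_openSegment_of_mem_intrinsicInterior hz (subset_affineSpan ℝ _ hu_mem)
  obtain ⟨w, hw, rfl⟩ := hull_eq ▸ hw_mem
  refine ⟨a • u + b • w, convex_stdSimplex ℝ ι hu hw ha.le hb.le hab, fun i => ?_, ?_⟩
  · exact add_pos_of_pos_of_nonneg (mul_pos ha (hu_pos i)) (mul_nonneg hb.le (hw.1 i))
  · rw [← map_smul, ← map_smul, ← map_add, Fintype.linearCombination_apply]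

end ConvexGeometry

section Duality

open Topology

variable {ι κ : Type*}

theorem mem_span_range_iff_forall_dotProduct_eq_zero {𝕜 : Type*} [Field 𝕜] [Fintype ι]
    {Ψ : κ → ι → 𝕜} {f : ι → 𝕜} :
    f ∈ Submodule.span 𝕜 (range Ψ) ↔ ∀ q, (∀ k, Ψ k ⬝ᵥ q = 0) → f ⬝ᵥ q = 0 := by
  classical
  constructor
  · intro hf q hq
    have span_le : Submodule.span 𝕜 (range Ψ) ≤ LinearMap.ker ((dotProductBilin 𝕜 𝕜).flip q) :=
      Submodule.span_le.2 (range_subset_iff.2 hq)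
    exact span_le hf
  · intro h
    rw [← Submodule.apply_mem_span_image_iff_mem_span (dotProductEquiv 𝕜 ι).injective, ← range_comp]
    exact FiniteDimensional.mem_span_of_iInf_ker_le_ker fun q hq =>
      h q ((Submodule.mem_iInf _).1 hq)

theorem exists_pos_nonneg_add_smul [Finite ι] {p : ι → ℝ} (hp : ∀ i, 0 < p i) (q : ι → ℝ) :
    ∃ ε : ℝ, 0 < ε ∧ 0 ≤ p + ε • q := by
  have eventually_pos : ∀ᶠ ε : ℝ in 𝓝 0, ∀ i, 0 < (p + ε • q) i :=
    Filter.eventually_all.2 fun i =>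
      (by fun_prop : Continuous fun ε : ℝ => (p + ε • q) i).tendsto' 0 (p i) (by simp)
        |>.eventually_const_lt (hp i)
  obtain ⟨ε, hε_pos, hε : 0 < ε⟩ :=
    ((eventually_pos.filter_mono nhdsWithin_le_nhds).and
      (self_mem_nhdsWithin (s := Ioi 0))).exists
  exact ⟨ε, hε, fun i => (hε_pos i).le⟩

theorem mem_span_range_of_forall_nonneg_dotProduct_eq_zero [Fintype ι] {Ψ : κ → ι → ℝ}
    {f p : ι → ℝ} (hp : ∀ i, 0 < p i) (hΨp : ∀ k, Ψ k ⬝ᵥ p = 0)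
    (hf : ∀ w, 0 ≤ w → (∀ k, Ψ k ⬝ᵥ w = 0) → f ⬝ᵥ w = 0) :
    f ∈ Submodule.span ℝ (range Ψ) := by
  refine mem_span_range_iff_forall_dotProduct_eq_zero.2 fun q hΨq => ?_
  obtain ⟨ε, hε, hw⟩ := exists_pos_nonneg_add_smul hp q
  have hfp : f ⬝ᵥ p = 0 := hf p (fun i => (hp i).le) hΨp
  have hfw : f ⬝ᵥ (p + ε • q) = 0 := hf _ hw fun k => by
    rw [dotProduct_add, dotProduct_smul, hΨp, hΨq, smul_zero, add_zero]
  rw [dotProduct_add, dotProduct_smul, hfp, zero_add] at hfw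
  exact (smul_eq_zero.1 hfw).resolve_left hε.ne'

end Duality

section WeightVector

variable {ι : Type*} [MeasurableSpace ι]

/-- The vector of point masses of a measure, which identifies measures on a finite space with
vectors. A point of infinite mass gets weight `0`. -/
def weightVector (P : Measure ι) : ι → ℝ := fun x => P.real {x}

variable [Fintype ι] [MeasurableSingletonClass ι]

theorem integral_eq_dotProduct_weightVector (P : Measure ι) [IsFiniteMeasure P] (f : ι → ℝ) :
    ∫ x, f x ∂P = f ⬝ᵥ weightVector P := by
  rw [integral_fintype .of_finite, dotProduct_comm]
  rfl

theorem exists_isProbabilityMeasure_weightVector_eq {w : ι → ℝ} (hw : w ∈ stdSimplex ℝ ι) :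
    ∃ P : Measure ι, IsProbabilityMeasure P ∧ weightVector P = w := by
  have sum_ofReal : ∑ x, ENNReal.ofReal (w x) = 1 := by
    rw [← ENNReal.ofReal_sum_of_nonneg fun x _ => hw.1 x, hw.2, ENNReal.ofReal_one]
  refine ⟨(PMF.ofFintype _ sum_ofReal).toMeasure, inferInstance, funext fun x => ?_⟩
  rw [weightVector, measureReal_def, PMF.toMeasure_apply_singleton _ _ (measurableSet_singleton x),
    PMF.ofFintype_apply, ENNReal.toReal_ofReal (hw.1 x)]

end WeightVector

section Constraint

variable {α : Type*} [TopologicalSpace α] [MeasurableSpace α] {X : Set α} {m : ℕ}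
  {H : Set (Measure X)} {Φ : X → Fin m → ℝ}

theorem IsConstraint.isProbabilityMeasure (hΦ : IsConstraint H Φ) {P : Measure X} (hP : P ∈ H) :
    IsProbabilityMeasure P := by
  rw [hΦ.2] at hP
  exact hP.1

variable [MeasurableSingletonClass X]

theorem IsConstraint.mem_iff_dotProduct_weightVector_eq_zero [Fintype X] (hΦ : IsConstraint H Φ)
    {P : Measure X} [IsProbabilityMeasure P] :
    P ∈ H ↔ ∀ i, (fun x => Φ x i) ⬝ᵥ weightVector P = 0 := by
  have memPPhi : MemPPhi P Φ :=
    (Integrable.of_finite (f := fun x => ∑ i, |Φ x i|)).lintegral_lt_top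
  have integral_eq_zero_iff :
      ∫ x, Φ x ∂P = 0 ↔ ∀ i, (fun x => Φ x i) ⬝ᵥ weightVector P = 0 := by
    simp only [funext_iff, Pi.zero_apply, eval_integral fun _ => Integrable.of_finite,
      integral_eq_dotProduct_weightVector]
  rw [hΦ.2, mem_ofPred_eq, integral_eq_zero_iff]
  exact ⟨fun h => h.2.2, fun h => ⟨inferInstance, memPPhi, h⟩⟩

theorem IsConstraint.exists_mem_weightVector_eq [Fintype X] (hΦ : IsConstraint H Φ)
    {w : X → ℝ} (hw : w ∈ stdSimplex ℝ X) (hΦw : ∀ i, (fun x => Φ x i) ⬝ᵥ w = 0) :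
    ∃ P ∈ H, weightVector P = w := by
  obtain ⟨P, _, rfl⟩ := exists_isProbabilityMeasure_weightVector_eq hw
  exact ⟨P, hΦ.mem_iff_dotProduct_weightVector_eq_zero.2 hΦw, rfl⟩

theorem IsConstraint.dotProduct_eq_zero_of_nonneg [Fintype X] (hΦ : IsConstraint H Φ)
    {f : X → ℝ} (hf : ∀ P ∈ H, ∫ x, f x ∂P = 0) {w : X → ℝ} (hw : 0 ≤ w)
    (hΦw : ∀ i, (fun x => Φ x i) ⬝ᵥ w = 0) : f ⬝ᵥ w = 0 := by
  obtain hsum | hsum := eq_or_ne (∑ x, w x) 0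
  · rw [(Fintype.sum_eq_zero_iff_of_nonneg hw).1 hsum, dotProduct_zero]
  have hw' : (∑ x, w x)⁻¹ • w ∈ stdSimplex ℝ X :=
    ⟨fun x => mul_nonneg (inv_nonneg.2 (Finset.sum_nonneg fun x _ => hw x)) (hw x), by
      simp only [Pi.smul_apply, smul_eq_mul, ← Finset.mul_sum, inv_mul_cancel₀ hsum]⟩
  obtain ⟨P, hP, hPw⟩ := hΦ.exists_mem_weightVector_eq hw' fun i => by
    rw [dotProduct_smul, hΦw, smul_zero]
  have := hΦ.isProbabilityMeasure hP
  have hfP := hf P hP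
  rw [integral_eq_dotProduct_weightVector, hPw, dotProduct_smul] at hfP
  exact (smul_eq_zero.1 hfP).resolve_left (inv_ne_zero hsum)

theorem ProperlyConstrained.exists_mem_weightVector_pos [Finite X] (hH : ProperlyConstrained H) :
    ∃ P ∈ H, ∀ x, 0 < weightVector P x := by
  have := Fintype.ofFinite X
  obtain ⟨k, Ψ, hΨ, hzero⟩ := hH
  obtain ⟨p, hp, p_pos, hΨp⟩ := exists_pos_weights_of_mem_intrinsicInterior_convexHull_range hzero
  obtain ⟨P, hP, rfl⟩ := hΨ.exists_mem_weightVector_eq hp fun i => by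
    simpa [dotProduct, mul_comm] using congrFun hΨp i
  exact ⟨P, hP, p_pos⟩

end Constraint

theorem statement13_general {α : Type*} [TopologicalSpace α] [MeasurableSpace α] {X : Set α}
    [MeasurableSingletonClass X] [Finite X] {m : ℕ} {H : Set (Measure X)}
    (hH : ProperlyConstrained H) {Φ : X → Fin m → ℝ} (hΦ : IsConstraint H Φ) :
    (Submodule.span ℝ (range fun i : Fin m => fun x : X => Φ x i) : Set (X → ℝ)) =
      {f : X → ℝ | ∀ P ∈ H, ∫ x, f x ∂P = 0} := by
  have := Fintype.ofFinite X
  refine Subset.antisymm (fun f hf P hP => ?_) fun f hf => ?_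
  · have := hΦ.isProbabilityMeasure hP
    rw [integral_eq_dotProduct_weightVector]
    exact mem_span_range_iff_forall_dotProduct_eq_zero.1 hf _
      (hΦ.mem_iff_dotProduct_weightVector_eq_zero.1 hP)
  · obtain ⟨P, hP, P_pos⟩ := hH.exists_mem_weightVector_pos
    have := hΦ.isProbabilityMeasure hP
    exact mem_span_range_of_forall_nonneg_dotProduct_eq_zero P_pos
      (hΦ.mem_iff_dotProduct_weightVector_eq_zero.1 hP)
      fun w hw hΦw => hΦ.dotProduct_eq_zero_of_nonneg hf hw hΦw

/-- for finite `X` (identifying functions and measures on `X` with vectors,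
so that `⟨P,f⟩ = ∫ f dP` is the dot product), the span of the components of any
constraint of a properly constrained hypothesis equals the orthogonal complement of `H`,
namely the set of functions whose expectation vanishes under every `P ∈ H`. -/
theorem statement13 {n m : ℕ} {X : Set (EuclideanSpace ℝ (Fin n))}
    (hXf : X.Finite) (hXne : X.Nonempty)
    (H : Set (Measure X)) (hHne : H.Nonempty) (hpc : ProperlyConstrained H)
    (Φ : X → Fin m → ℝ) (hΦ : IsConstraint H Φ) :
    (Submodule.span ℝ (Set.range fun i : Fin m => fun x : X => Φ x i) : Set (X → ℝ)) =
      {f : X → ℝ | ∀ P ∈ H, ∫ x, f x ∂P = 0} := by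
  have : Finite X := hXf
  exact statement13_general hpc hΦ
end

section
/- Let X be a nonempty closed subset of ℝⁿ, H a finitely constrained hypothesis on X, and Φ : X → ℝᵐ a constraint for H. A closed set S ⊆ X is compatible for H (i.e. some P ∈ H has support contained in S) if and only if 0 lies in the convex hull of Φ(S). In that case, the restriction H_S = H ∩ P_S is a finitely constrained hypothesis on S with constraint the restriction Φ|_S; in particular H_S = {P ∈ P_Φ ∩ P_S : ⟨P, Φ|_S⟩ = 0}. -/
open MeasureTheory Set ENNReal

/-!
A probability measure carried by `S` has its mean of `Φ` in the convex hull of `Φ '' S`, and every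
point of this hull is such a mean: the means form a convex set containing the means `Φ x` of the
point masses at `x ∈ S`.

The hull need not be closed, so `Convex.integral_mem` does not apply. Instead one argues by
induction on the dimension: if the mean `b` of `f` lay outside a convex set `C` carrying `f`, a
supporting functional `l` would satisfy `l ∘ f ≤ l b` almost everywhere with equality of the
integrals, so `f` would almost surely lie in the hyperplane `b + ker l`, where the induction
hypothesis gives `b ∈ C`.
-/

theorem exists_linearMap_ne_zero_forall_eq_of_affineSpan_ne_top {K V : Type*} [Field K]
    [AddCommGroup V] [Module K V] {s : Set V} {c : V} (hc : c ∈ s) (hs : affineSpan K s ≠ ⊤) :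
    ∃ f : V →ₗ[K] K, f ≠ 0 ∧ ∀ x ∈ s, f x = f c := by
  have hc' : c ∈ affineSpan K s := subset_affineSpan K s hc
  have hdir : (affineSpan K s).direction < ⊤ := lt_top_iff_ne_top.2 fun h =>
    hs ((AffineSubspace.direction_eq_top_iff_of_nonempty ⟨c, hc'⟩).1 h)
  obtain ⟨f, hf, hker⟩ := Submodule.exists_le_ker_of_lt_top _ hdir
  refine ⟨f, hf, fun x hx => sub_eq_zero.1 ?_⟩
  rw [← map_sub]
  exact hker (AffineSubspace.vsub_mem_direction (subset_affineSpan K s hx) hc')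

section Barycenter

variable {Ω E : Type*} [MeasurableSpace Ω] [NormedAddCommGroup E] [NormedSpace ℝ E]

theorem exists_ne_zero_forall_le_of_convex_of_notMem [FiniteDimensional ℝ E] {C : Set E} {b : E}
    (hC : Convex ℝ C) (hne : C.Nonempty) (hb : b ∉ C) :
    ∃ l : StrongDual ℝ E, l ≠ 0 ∧ ∀ y ∈ C, l y ≤ l b := by
  by_cases hint : (interior C).Nonempty
  · exact geometric_hahn_banach_of_nonempty_interior_point hC (fun h => hb (interior_subset h)) hint
  obtain ⟨c, hc⟩ := hne
  obtain ⟨f, hf, hconst⟩ := exists_linearMap_ne_zero_forall_eq_of_affineSpan_ne_top hc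
    fun h => hint (hC.interior_nonempty_iff_affineSpan_eq_top.2 h)
  have hf' : f.toContinuousLinearMap ≠ 0 := by simpa using hf
  rcases le_total (f c) (f b) with h | h
  · exact ⟨f.toContinuousLinearMap, hf', fun y hy => by simpa [hconst y hy] using h⟩
  · exact ⟨-f.toContinuousLinearMap, neg_ne_zero.2 hf', fun y hy => by simpa [hconst y hy] using h⟩

theorem ae_eq_integral_of_ae_le_integral {P : Measure Ω} [IsProbabilityMeasure P] {g : Ω → ℝ}
    (hg : Integrable g P) (hle : ∀ᵐ x ∂P, g x ≤ ∫ y, g y ∂P) :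
    ∀ᵐ x ∂P, g x = ∫ y, g y ∂P :=
  (integral_eq_iff_of_ae_le hg (integrable_const _) hle).1 (by simp)

theorem integral_mem_of_convex_of_finiteDimensional [FiniteDimensional ℝ E] {P : Measure Ω}
    [IsProbabilityMeasure P] {C : Set E} (hC : Convex ℝ C) {f : Ω → E} (hf : Integrable f P)
    (hfC : ∀ᵐ x ∂P, f x ∈ C) : ∫ x, f x ∂P ∈ C := by
  induction hd : Module.finrank ℝ E using Nat.strong_induction_on generalizing E with
  | _ d ih =>
  subst hd
  set b := ∫ x, f x ∂P with hb
  by_contra hbC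
  obtain ⟨x₀, hx₀⟩ := hfC.exists
  obtain ⟨l, hl, hle⟩ := exists_ne_zero_forall_le_of_convex_of_notMem hC ⟨_, hx₀⟩ hbC
  have hlb : ∫ x, l (f x) ∂P = l b := l.integral_comp_comm hf
  have hlf : ∀ᵐ x ∂P, l (f x) = l b := by
    rw [← hlb]
    exact ae_eq_integral_of_ae_le_integral (l.integrable_comp hf)
      (hfC.mono fun x hx => (hle _ hx).trans_eq hlb.symm)
  have hker : l.ker ≠ ⊤ := fun h => hl (by ext x; exact h.ge (Submodule.mem_top (x := x)))
  obtain ⟨π, hπ⟩ := Submodule.ClosedComplemented.of_finiteDimensional l.ker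
  have hfb : Integrable (fun x => f x - b) P := hf.sub (integrable_const b)
  have hmean : ∫ x, π (f x - b) ∂P = 0 := by
    rw [π.integral_comp_comm hfb, integral_sub hf (integrable_const b)]
    simp [← hb]
  have hmem : ∀ᵐ x ∂P, π (f x - b) ∈ {v : l.ker | b + v ∈ C} := by
    filter_upwards [hfC, hlf] with x hxC hxl
    have hxker : f x - b ∈ l.ker := by simp [hxl]
    simpa [hπ ⟨f x - b, hxker⟩] using hxC
  have hconv : Convex ℝ {v : l.ker | b + v ∈ C} :=
    (hC.translate_preimage_right b).linear_preimage l.ker.subtype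
  have hzero := ih _ (Submodule.finrank_lt hker) hconv (π.integrable_comp hfb) hmem rfl
  rw [hmean] at hzero
  exact hbC (by rwa [mem_ofPred_eq, ZeroMemClass.coe_zero, add_zero] at hzero)

theorem convex_setOf_integral_eq (f : Ω → E) (S : Set Ω) :
    Convex ℝ {v | ∃ P : Measure Ω, IsProbabilityMeasure P ∧ P Sᶜ = 0 ∧ Integrable f P ∧
      ∫ x, f x ∂P = v} := by
  rintro _ ⟨P, _, hPS, hPf, rfl⟩ _ ⟨Q, _, hQS, hQf, rfl⟩ a b ha hb hab
  lift a to NNReal using ha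
  lift b to NNReal using hb
  have hab' : a + b = 1 := by exact_mod_cast hab
  have hPf' : Integrable f (a • P) := hPf.smul_measure_nnreal
  have hQf' : Integrable f (b • Q) := hQf.smul_measure_nnreal
  refine ⟨a • P + b • Q, ⟨?_⟩, by simp [hPS, hQS], hPf'.add_measure hQf', ?_⟩
  · simpa using mod_cast hab'
  · rw [integral_add_measure hPf' hQf', integral_smul_nnreal_measure, integral_smul_nnreal_measure]
    rfl

theorem exists_integral_eq_iff_mem_convexHull [FiniteDimensional ℝ E] {f : Ω → E}
    (hf : StronglyMeasurable f) {S : Set Ω} (hS : MeasurableSet S) {v : E} :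
    (∃ P : Measure Ω, IsProbabilityMeasure P ∧ P Sᶜ = 0 ∧ Integrable f P ∧ ∫ x, f x ∂P = v) ↔
      v ∈ convexHull ℝ (f '' S) := by
  constructor
  · rintro ⟨P, _, hPS, hPf, rfl⟩
    have hmem : ∀ᵐ x ∂P, x ∈ S := hPS
    exact integral_mem_of_convex_of_finiteDimensional (convex_convexHull ℝ _) hPf
      (hmem.mono fun x hx => subset_convexHull ℝ _ (mem_image_of_mem f hx))
  · refine fun hv => convexHull_min ?_ (convex_setOf_integral_eq f S) hv
    rintro _ ⟨x, hx, rfl⟩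
    refine ⟨Measure.dirac x, inferInstance, ?_, ?_, integral_dirac' f x hf⟩
    · simp [Measure.dirac_apply' _ hS.compl, hx]
    · exact integrable_dirac' hf enorm_lt_top

end Barycenter

theorem msupport_eq_support {α : Type*} [TopologicalSpace α] [MeasurableSpace α]
    (P : Measure α) : msupport P = P.support := by
  rw [Measure.support_eq_forall_isOpen]
  exact Set.ext fun x => forall_congr' fun U => forall_comm

theorem msupport_subset_iff_measure_compl_eq_zero {α : Type*} [TopologicalSpace α]
    [MeasurableSpace α] [HereditarilyLindelofSpace α] {P : Measure α} {S : Set α}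
    (hS : IsClosed S) : msupport P ⊆ S ↔ P Sᶜ = 0 := by
  rw [msupport_eq_support]
  exact ⟨fun h => measure_mono_null (compl_subset_compl.2 h) Measure.measure_compl_support,
    Measure.support_subset_of_isClosed hS⟩

theorem memPPhi_iff_integrable {α : Type*} [MeasurableSpace α] {X : Set α} {m : ℕ}
    {P : Measure X} {Φ : X → Fin m → ℝ} (hΦ : AEStronglyMeasurable Φ P) :
    MemPPhi P Φ ↔ Integrable Φ P := by
  refine ⟨fun h => ⟨hΦ, ?_⟩, fun h => ?_⟩
  · have hnorm (x : X) : ‖Φ x‖ ≤ ∑ i, |Φ x i| :=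
      (pi_norm_le_iff_of_nonneg (by positivity)).2 fun i =>
        Finset.single_le_sum (f := fun i => |Φ x i|) (fun _ _ => abs_nonneg _) (Finset.mem_univ i)
    rw [hasFiniteIntegral_iff_norm]
    exact (lintegral_mono fun x => ENNReal.ofReal_le_ofReal (hnorm x)).trans_lt h
  · exact (integrable_finsetSum _ fun i _ => (h.eval i).abs).lintegral_lt_top

theorem statement15_general {α : Type*} [TopologicalSpace α] [MeasurableSpace α]
    {X : Set α} [HereditarilyLindelofSpace X] [OpensMeasurableSpace X] {m : ℕ}
    (H : Set (Measure X)) (Φ : X → Fin m → ℝ) (hΦ : IsConstraint H Φ)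
    (S : Set X) (hS : IsClosed S) :
    ((∃ P ∈ H, msupport P ⊆ S) ↔ (0 : Fin m → ℝ) ∈ convexHull ℝ (Φ '' S)) ∧
    ((∃ P ∈ H, msupport P ⊆ S) →
      ({P | P ∈ H ∧ msupport P ⊆ S}.Nonempty ∧
        {P | P ∈ H ∧ msupport P ⊆ S} =
          {P : Measure X | IsProbabilityMeasure P ∧ MemPPhi P Φ ∧ msupport P ⊆ S ∧
            ∫ x, Φ x ∂P = 0})) := by
  obtain ⟨hcont, rfl⟩ := hΦ
  refine ⟨?_, fun hcompat => ⟨hcompat, ?_⟩⟩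
  · rw [← exists_integral_eq_iff_mem_convexHull hcont.stronglyMeasurable hS.measurableSet]
    refine exists_congr fun P => ?_
    rw [msupport_subset_iff_measure_compl_eq_zero hS, mem_ofPred_eq,
      memPPhi_iff_integrable hcont.aestronglyMeasurable]
    tauto
  · ext P
    simp only [mem_ofPred_eq]
    tauto

/-- a closed `S ⊆ X` is compatible for a finitely constrained `H`
(some `P ∈ H` is supported in `S`) iff `0 ∈ conv Φ(S)`; in that case, the restriction
`H_S = H ∩ P_S` is nonempty (a hypothesis on `S`) and is finitely constrained with
constraint `Φ|_S`, i.e. `H_S = {P ∈ P_Φ ∩ P_S : ⟨P, Φ|_S⟩ = 0}`. -/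
theorem statement15 {n m : ℕ} {X : Set (EuclideanSpace ℝ (Fin n))}
    (hXc : IsClosed X) (hXne : X.Nonempty)
    (H : Set (Measure X)) (hHne : H.Nonempty)
    (Φ : X → Fin m → ℝ) (hΦ : IsConstraint H Φ)
    (S : Set X) (hS : IsClosed S) :
    ((∃ P ∈ H, msupport P ⊆ S) ↔ (0 : Fin m → ℝ) ∈ convexHull ℝ (Φ '' S)) ∧
    ((∃ P ∈ H, msupport P ⊆ S) →
      ({P | P ∈ H ∧ msupport P ⊆ S}.Nonempty ∧
        {P | P ∈ H ∧ msupport P ⊆ S} =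
          {P : Measure X | IsProbabilityMeasure P ∧ MemPPhi P Φ ∧ msupport P ⊆ S ∧
            ∫ x, Φ x ∂P = 0})) :=
  statement15_general H Φ hΦ S hS
end

section
/- Let X be a nonempty closed subset of ℝⁿ, H a properly constrained hypothesis on X, and Φ : X → ℝᵐ a constraint for H, with dual e-class E_H^∨ = {1 − λ·Φ : λ ∈ Λ_Φ} where Λ_Φ = {λ ∈ ℝᵐ : sup_{x∈X} λ·Φ(x) ≤ 1}. Then for every countable set S ⊆ X and every e-variable E ∈ E_H, there exists E' ∈ E_H^∨ such that E'(x) ≥ E(x) for every x ∈ S. -/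
open MeasureTheory Set ENNReal

/-! Call a finitely supported weight `w ≥ 0` on `X` balanced if `∑ w x • Φ x = 0`. Then the
normalisation of `∑ w x • δ_x` belongs to `H`, so an e-variable `E` satisfies
`∑ w x * (1 - E x) ≥ 0`: the functional `w ↦ ∑ w x * (1 - E x)` is nonnegative on the nonnegative
weights in the kernel of `w ↦ ∑ w x • Φ x`. By the Riesz extension theorem it dominates, on all
nonnegative weights, a functional vanishing on this kernel, i.e. one of the form
`w ↦ μ (∑ w x • Φ x)`; evaluating at point masses gives `μ (Φ x) ≤ 1 - E x` for every `x`.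

The Riesz extension theorem needs every point to carry positive mass in some balanced weight.
Whether a weight is balanced depends on `H` only and not on the constraint chosen for it, so this
can be read off from a proper constraint `Ψ`: `0` being in the relative interior of the convex hull
of its range, for each `x` some `-t • Ψ x` with `t > 0` lies in the hull, and adding mass `t` at `x`
to the corresponding convex combination gives a balanced weight. -/

section Duality

open Module

variable {ι M V : Type*} [AddCommGroup M] [Module ℝ M] [AddCommGroup V] [Module ℝ V]

theorem exists_dual_comp_le_of_nonneg_on_ker (s : PointedCone ℝ M) (T : M →ₗ[ℝ] V) (G : Dual ℝ M)
    (nonneg : ∀ w ∈ s, T w = 0 → 0 ≤ G w)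
    (dense : ∀ y, ∃ w ∈ LinearMap.ker T, w + y ∈ s) :
    ∃ μ : Dual ℝ V, ∀ w ∈ s, μ (T w) ≤ G w := by
  obtain ⟨g, g_eq, g_nonneg⟩ := riesz_extension s (G.toPMap (LinearMap.ker T))
    (fun w hw => nonneg w hw w.2)
    (fun y => let ⟨w, hw, hwy⟩ := dense y; ⟨⟨w, hw⟩, hwy⟩)
  have hker : G - g ∈ (LinearMap.ker T).dualAnnihilator :=
    (Submodule.mem_dualAnnihilator _).2 fun w hw => sub_eq_zero.2 (g_eq ⟨w, hw⟩).symm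
  rw [← LinearMap.range_dualMap_eq_dualAnnihilator_ker] at hker
  obtain ⟨μ, hμ⟩ := hker
  refine ⟨μ, fun w hw => ?_⟩
  calc μ (T w) = G w - g w := LinearMap.congr_fun hμ w
    _ ≤ G w := sub_le_self _ (g_nonneg w hw)

theorem exists_mem_add_nonneg_of_forall_exists_pos (K : Submodule ℝ (ι →₀ ℝ))
    (hK : ∀ i, ∃ w ∈ K, 0 ≤ w ∧ 0 < w i) (y : ι →₀ ℝ) : ∃ w ∈ K, 0 ≤ w + y := by
  induction y using Finsupp.induction_linear with
  | zero => exact ⟨0, K.zero_mem, by simp⟩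
  | add y z hy hz =>
    obtain ⟨u, huK, hu⟩ := hy
    obtain ⟨v, hvK, hv⟩ := hz
    exact ⟨u + v, K.add_mem huK hvK, add_add_add_comm u v y z ▸ add_nonneg hu hv⟩
  | single i a =>
    obtain ⟨w, hwK, hw, hwi⟩ := hK i
    refine ⟨(|a| / w i) • w, K.smul_mem _ hwK, fun j => ?_⟩
    rcases eq_or_ne j i with rfl | hji
    · simpa [div_mul_cancel₀ _ hwi.ne'] using neg_le_iff_add_nonneg'.1 (neg_abs_le a)
    · simpa [Finsupp.single_eq_of_ne hji] using
        mul_nonneg (div_nonneg (abs_nonneg a) hwi.le) (hw j)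

theorem exists_dual_le_of_linearCombination_nonneg (Φ : ι → V) (F : ι → ℝ)
    (hΦ : ∀ i, ∃ w : ι →₀ ℝ, 0 ≤ w ∧ 0 < w i ∧ Finsupp.linearCombination ℝ Φ w = 0)
    (hF : ∀ w : ι →₀ ℝ, 0 ≤ w → Finsupp.linearCombination ℝ Φ w = 0 →
      0 ≤ Finsupp.linearCombination ℝ F w) :
    ∃ μ : Dual ℝ V, ∀ i, μ (Φ i) ≤ F i := by
  obtain ⟨μ, hμ⟩ := exists_dual_comp_le_of_nonneg_on_ker (PointedCone.positive ℝ (ι →₀ ℝ))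
    (Finsupp.linearCombination ℝ Φ) (Finsupp.linearCombination ℝ F) hF
    (exists_mem_add_nonneg_of_forall_exists_pos _ fun i =>
      let ⟨w, hw, hwi, hw0⟩ := hΦ i; ⟨w, hw0, hw, hwi⟩)
  exact ⟨μ, fun i => by simpa using hμ (Finsupp.single i 1) (Finsupp.single_nonneg.2 zero_le_one)⟩

end Duality

section RelativeInterior

variable {ι V : Type*} [AddCommGroup V] [Module ℝ V]

theorem convexHull_range_subset_linearCombination_image_nonneg (Φ : ι → V) :
    convexHull ℝ (range Φ) ⊆ Finsupp.linearCombination ℝ Φ '' Ici 0 := by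
  refine convexHull_min ?_ ((convex_Ici 0).linear_image _)
  rintro _ ⟨i, rfl⟩
  exact ⟨Finsupp.single i 1, Finsupp.single_nonneg.2 zero_le_one, by simp⟩

variable [TopologicalSpace V] [ContinuousSMul ℝ V]

theorem exists_pos_neg_smul_mem_of_zero_mem_intrinsicInterior {s : Set V}
    (h0 : (0 : V) ∈ intrinsicInterior ℝ s) {v : V} (hv : v ∈ s) : ∃ t : ℝ, 0 < t ∧ -t • v ∈ s := by
  obtain ⟨z, hz, hz0⟩ := mem_intrinsicInterior.1 h0
  have hzero : (0 : V) ∈ affineSpan ℝ s := hz0 ▸ z.2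
  have hmem (t : ℝ) : -t • v ∈ affineSpan ℝ s := by
    simpa [AffineMap.lineMap_apply] using
      AffineMap.lineMap_mem (-t) hzero (subset_affineSpan ℝ s hv)
  let γ : ℝ → affineSpan ℝ s := fun t => ⟨-t • v, hmem t⟩
  have hγ : Continuous γ := by fun_prop
  have hγ0 : γ 0 = z := Subtype.ext (by simp [γ, hz0])
  have hev : ∀ᶠ t in nhdsWithin (0 : ℝ) (Ioi 0), γ t ∈ ((↑) ⁻¹' s : Set (affineSpan ℝ s)) :=
    nhdsWithin_le_nhds <| hγ.continuousAt <| mem_interior_iff_mem_nhds.1 <| hγ0 ▸ hz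
  obtain ⟨t, hts, ht⟩ := (hev.and self_mem_nhdsWithin).exists
  exact ⟨t, ht, hts⟩

theorem exists_nonneg_pos_linearCombination_eq_zero {Φ : ι → V}
    (h0 : (0 : V) ∈ intrinsicInterior ℝ (convexHull ℝ (range Φ))) (i : ι) :
    ∃ w : ι →₀ ℝ, 0 ≤ w ∧ 0 < w i ∧ Finsupp.linearCombination ℝ Φ w = 0 := by
  obtain ⟨t, ht, htΦ⟩ := exists_pos_neg_smul_mem_of_zero_mem_intrinsicInterior h0
    (subset_convexHull ℝ _ (mem_range_self i))
  obtain ⟨w, hw, hwt⟩ := convexHull_range_subset_linearCombination_image_nonneg Φ htΦ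
  refine ⟨w + Finsupp.single i t, add_nonneg hw (Finsupp.single_nonneg.2 ht.le), ?_, ?_⟩
  · simpa using add_pos_of_nonneg_of_pos (hw i) ht
  · simp [hwt]

end RelativeInterior

theorem linearCombination_one_pos {ι : Type*} {w : ι →₀ ℝ} (hw : 0 ≤ w) (hw0 : w ≠ 0) :
    0 < Finsupp.linearCombination ℝ (1 : ι → ℝ) w := by
  simp only [Finsupp.linearCombination_apply, Finsupp.sum, Pi.one_apply, smul_eq_mul, mul_one]
  exact Finset.sum_pos (fun i hi => (hw i).lt_of_ne' (Finsupp.mem_support_iff.1 hi))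
    (Finsupp.support_nonempty_iff.2 hw0)

section DiscreteMeasure

variable {Y : Type*} [MeasurableSpace Y]

/-- The finitely supported measure `∑ x, w x • δ_x`. The weights are real so that they form a
vector space; negative ones count as zero. -/
noncomputable def discreteMeasure (w : Y →₀ ℝ) : Measure Y :=
  ∑ x ∈ w.support, ENNReal.ofReal (w x) • Measure.dirac x

variable {w : Y →₀ ℝ}

instance : IsFiniteMeasure (discreteMeasure w) := by
  refine ⟨?_⟩
  simp [discreteMeasure, ENNReal.sum_lt_top]

theorem discreteMeasure_univ (hw : 0 ≤ w) :
    discreteMeasure w univ = ENNReal.ofReal (Finsupp.linearCombination ℝ 1 w) := by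
  simp [discreteMeasure, Finsupp.linearCombination_apply, Finsupp.sum,
    ENNReal.ofReal_sum_of_nonneg fun x _ => hw x]

theorem discreteMeasure_ne_zero (hw : 0 ≤ w) (hw0 : w ≠ 0) : discreteMeasure w ≠ 0 := by
  rw [← Measure.measure_univ_ne_zero, discreteMeasure_univ hw]
  exact (ENNReal.ofReal_pos.2 (linearCombination_one_pos hw hw0)).ne'

variable [MeasurableSingletonClass Y]

theorem lintegral_ofReal_discreteMeasure (hw : 0 ≤ w) {f : Y → ℝ} (hf : 0 ≤ f) :
    ∫⁻ x, ENNReal.ofReal (f x) ∂discreteMeasure w =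
      ENNReal.ofReal (Finsupp.linearCombination ℝ f w) := by
  simp only [discreteMeasure, lintegral_finsetSum_measure, lintegral_smul_measure, lintegral_dirac,
    smul_eq_mul, Finsupp.linearCombination_apply, Finsupp.sum]
  rw [ENNReal.ofReal_sum_of_nonneg fun x _ => mul_nonneg (hw x) (hf x)]
  exact Finset.sum_congr rfl fun x _ => (ENNReal.ofReal_mul (hw x)).symm

theorem integral_discreteMeasure {V : Type*} [NormedAddCommGroup V] [NormedSpace ℝ V]
    [CompleteSpace V] (hw : 0 ≤ w) (f : Y → V) :
    ∫ x, f x ∂discreteMeasure w = Finsupp.linearCombination ℝ f w := by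
  have hint : ∀ x ∈ w.support, Integrable f (ENNReal.ofReal (w x) • Measure.dirac x) :=
    fun x _ => (integrable_dirac (by simp)).smul_measure ENNReal.ofReal_ne_top
  rw [discreteMeasure, integral_finsetSum_measure hint]
  simp [Finsupp.linearCombination_apply, Finsupp.sum, ENNReal.toReal_ofReal (hw _)]

end DiscreteMeasure

section Constraint

variable {α : Type*} [TopologicalSpace α] [MeasurableSpace α] {X : Set α}
  [MeasurableSingletonClass X] {k m : ℕ} {H : Set (Measure X)}
  {Φ : X → Fin m → ℝ} {Ψ : X → Fin k → ℝ} {w : X →₀ ℝ}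

theorem IsConstraint.normalized_discreteMeasure_mem_iff (hΦ : IsConstraint H Φ) (hw : 0 ≤ w)
    (hw0 : w ≠ 0) :
    (discreteMeasure w univ)⁻¹ • discreteMeasure w ∈ H ↔
      Finsupp.linearCombination ℝ Φ w = 0 := by
  have hne : NeZero (discreteMeasure w) := ⟨discreteMeasure_ne_zero hw hw0⟩
  have hinv_ne_top : (discreteMeasure w univ)⁻¹ ≠ ∞ :=
    ENNReal.inv_ne_top.2 (Measure.measure_univ_ne_zero.2 hne.out)
  have hinv_toReal_ne_zero : ((discreteMeasure w univ)⁻¹).toReal ≠ 0 :=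
    ENNReal.toReal_ne_zero.2 ⟨ENNReal.inv_ne_zero.2 (measure_ne_top _ _), hinv_ne_top⟩
  have hmem : MemPPhi ((discreteMeasure w univ)⁻¹ • discreteMeasure w) Φ := by
    rw [MemPPhi, lintegral_smul_measure, lintegral_ofReal_discreteMeasure hw
      fun x => Finset.sum_nonneg fun i _ => abs_nonneg (Φ x i)]
    exact ENNReal.mul_lt_top hinv_ne_top.lt_top ENNReal.ofReal_lt_top
  simp only [hΦ.2, mem_ofPred_eq, isProbabilityMeasureSMul, hmem, true_and, integral_smul_measure,
    integral_discreteMeasure hw, smul_eq_zero, hinv_toReal_ne_zero, false_or]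

theorem IsConstraint.linearCombination_eq_zero_iff (hΦ : IsConstraint H Φ) (hΨ : IsConstraint H Ψ)
    (hw : 0 ≤ w) :
    Finsupp.linearCombination ℝ Φ w = 0 ↔ Finsupp.linearCombination ℝ Ψ w = 0 := by
  rcases eq_or_ne w 0 with rfl | hw0
  · simp
  · rw [← hΦ.normalized_discreteMeasure_mem_iff hw hw0,
      hΨ.normalized_discreteMeasure_mem_iff hw hw0]

theorem IsEVar.linearCombination_one_sub_nonneg {E : X → ℝ} (hE : IsEVar H E)
    (hΦ : IsConstraint H Φ) (hw : 0 ≤ w) (hwΦ : Finsupp.linearCombination ℝ Φ w = 0) :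
    0 ≤ Finsupp.linearCombination ℝ (1 - E) w := by
  rcases eq_or_ne w 0 with rfl | hw0
  · simp
  have hmass : discreteMeasure w univ ≠ 0 :=
    Measure.measure_univ_ne_zero.2 (discreteMeasure_ne_zero hw hw0)
  have hexp := hE.2.2 _ ((hΦ.normalized_discreteMeasure_mem_iff hw hw0).2 hwΦ)
  rw [lintegral_smul_measure, smul_eq_mul, ENNReal.inv_mul_le_iff hmass (measure_ne_top _ _),
    mul_one, lintegral_ofReal_discreteMeasure hw hE.2.1, discreteMeasure_univ hw,
    ENNReal.ofReal_le_ofReal_iff (linearCombination_one_pos hw hw0).le] at hexp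
  simpa [Finsupp.linearCombination_apply, Finsupp.sum, mul_sub] using hexp

theorem statement19_general (hpc : ProperlyConstrained H) (hΦ : IsConstraint H Φ) {E : X → ℝ}
    (hE : IsEVar H E) : ∃ E' ∈ dualClass Φ, Majorises E' E := by
  obtain ⟨k, Ψ, hΨ, hΨ0⟩ := hpc
  have hbalanced (x : X) :
      ∃ w : X →₀ ℝ, 0 ≤ w ∧ 0 < w x ∧ Finsupp.linearCombination ℝ Φ w = 0 := by
    obtain ⟨w, hw, hwx, hwΨ⟩ := exists_nonneg_pos_linearCombination_eq_zero hΨ0 x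
    exact ⟨w, hw, hwx, (hΦ.linearCombination_eq_zero_iff hΨ hw).2 hwΨ⟩
  obtain ⟨μ, hμ⟩ := exists_dual_le_of_linearCombination_nonneg Φ (1 - E) hbalanced
    fun _ hw => hE.linearCombination_one_sub_nonneg hΦ hw
  obtain ⟨l, rfl⟩ := (dotProductEquiv ℝ (Fin m)).surjective μ
  have hl (x : X) : ∑ i, l i * Φ x i ≤ 1 - E x := hμ x
  refine ⟨_, ⟨l, fun x _ => ?_, rfl⟩, fun x => ?_⟩
  · exact (hl x).trans (sub_le_self _ (hE.2.1 x))
  · exact le_sub_comm.1 (hl x)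

end Constraint

/-- for a properly constrained hypothesis, every e-variable is dominated on
any countable set `S ⊆ X` by an element of the dual e-class. -/
theorem statement19 {n m : ℕ} {X : Set (EuclideanSpace ℝ (Fin n))}
    (hXc : IsClosed X) (hXne : X.Nonempty)
    (H : Set (Measure X)) (hHne : H.Nonempty) (hpc : ProperlyConstrained H)
    (Φ : X → Fin m → ℝ) (hΦ : IsConstraint H Φ)
    (S : Set X) (hS : S.Countable)
    (E : X → ℝ) (hE : IsEVar H E) :
    ∃ E' ∈ dualClass Φ, ∀ x ∈ S, E x ≤ E' x := by
  obtain ⟨E', hE', hmaj⟩ := statement19_general hpc hΦ hE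
  exact ⟨E', hE', fun x _ => hmaj x⟩
end
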